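/- Let (z_t)_{t≥1} be an orbit of the clipped shallow PLRNN z_t = A·z_{t−1} + W_1·[φ(W_2·z_{t−1} + h_2) − φ(W_2·z_{t−1})] + h_1, with A ∈ ℝ^{M×M}, W_1 ∈ ℝ^{M×L}, W_2 ∈ ℝ^{L×M}, h_2 ∈ ℝ^L, h_1 ∈ ℝ^M. Set h̄_max := √L · max_l |(h_2)_l|. Then for every T ≥ 1: ‖z_T‖₂ ≤ ‖A‖₂^{T−1}·‖z_1‖₂ + h̄_max·‖W_1‖₂·Σ_{j=0}^{T−2} ‖A‖₂^j + Σ_{j=0}^{T−2} ‖A‖₂^j·‖h_1‖₂, where ‖·‖₂ denotes the spectral norm for matrices and the Euclidean norm for vectors. -/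

import Mathlib

/-- The spectral (operator 2-) norm of a real matrix: the operator norm of the
associated linear map between Euclidean spaces. -/
noncomputable def spec {m n : ℕ} (A : Matrix (Fin m) (Fin n) ℝ) : ℝ :=
  ‖LinearMap.toContinuousLinearMap (Matrix.toEuclideanLin A)‖

/-- The Euclidean (2-) norm of a real vector. -/
noncomputable def eunorm {n : ℕ} (v : Fin n → ℝ) : ℝ :=
  ‖(EuclideanSpace.equiv (Fin n) ℝ).symm v‖

/-- Componentwise ReLU nonlinearity `φ(x) = max(0, x)`. -/
def relu {n : ℕ} (v : Fin n → ℝ) : Fin n → ℝ := fun i => max 0 (v i)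

theorem eunorm_add_le {n : ℕ} (v w : Fin n → ℝ) : eunorm (v + w) ≤ eunorm v + eunorm w := by
  unfold eunorm
  rw [map_add]
  exact norm_add_le _ _

theorem eunorm_mulVec_le {m n : ℕ} (B : Matrix (Fin m) (Fin n) ℝ) (v : Fin n → ℝ) :
    eunorm (B.mulVec v) ≤ spec B * eunorm v :=
  (LinearMap.toContinuousLinearMap (Matrix.toEuclideanLin B)).le_opNorm
    ((EuclideanSpace.equiv (Fin n) ℝ).symm v)

theorem eunorm_le_sqrt_mul {n : ℕ} (v : Fin n → ℝ) (c : ℝ) (hc : 0 ≤ c)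
    (h : ∀ i, |v i| ≤ c) : eunorm v ≤ Real.sqrt n * c := by
  have e : eunorm v = Real.sqrt (∑ i, ‖v i‖ ^ 2) := EuclideanSpace.norm_eq _
  rw [e]
  have h3 : ∑ i, ‖v i‖ ^ 2 ≤ (n : ℝ) * c ^ 2 := by
    calc ∑ i, ‖v i‖ ^ 2 ≤ ∑ _i : Fin n, c ^ 2 := by
          apply Finset.sum_le_sum
          intro i _
          exact pow_le_pow_left₀ (norm_nonneg _) (h i) 2
      _ = (n : ℝ) * c ^ 2 := by simp
  calc Real.sqrt (∑ i, ‖v i‖ ^ 2) ≤ Real.sqrt ((n : ℝ) * c ^ 2) := Real.sqrt_le_sqrt h3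
    _ = Real.sqrt n * c := by
      rw [Real.sqrt_mul (Nat.cast_nonneg n), Real.sqrt_sq hc]

theorem relu_diff_le {n : ℕ} (v h : Fin n → ℝ) (i : Fin n) :
    |(relu (v + h) - relu v) i| ≤ |h i| := by
  have := abs_max_sub_max_le_abs (v i + h i) (v i) 0
  simpa [relu, max_comm] using this

/-- For any orbit `(z_t)_{t ≥ 1}` of the clipped shallow PLRNN
`z_t = A z_{t-1} + W₁ [φ(W₂ z_{t-1} + h₂) - φ(W₂ z_{t-1})] + h₁`, and every `T ≥ 1`,
`‖z_T‖₂ ≤ ‖A‖₂^{T-1} ‖z_1‖₂ + h̄_max ‖W₁‖₂ ∑_{j=0}^{T-2} ‖A‖₂^j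
  + ∑_{j=0}^{T-2} ‖A‖₂^j ‖h₁‖₂`, where `h̄_max = √L · max_l |(h₂)_l|`. -/
theorem clipped_shPLRNN_orbit_norm_bound {M L : ℕ} (hL : 0 < L)
    (A : Matrix (Fin M) (Fin M) ℝ) (W1 : Matrix (Fin M) (Fin L) ℝ)
    (W2 : Matrix (Fin L) (Fin M) ℝ) (h2 : Fin L → ℝ) (h1 : Fin M → ℝ)
    (z : ℕ → Fin M → ℝ)
    (hz : ∀ t, 1 ≤ t →
      z (t + 1) = A.mulVec (z t)
        + W1.mulVec (relu (W2.mulVec (z t) + h2) - relu (W2.mulVec (z t))) + h1) :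
    ∀ T, 1 ≤ T →
      eunorm (z T)
        ≤ spec A ^ (T - 1) * eunorm (z 1)
          + (Real.sqrt L * Finset.univ.sup' ⟨⟨0, hL⟩, Finset.mem_univ _⟩ (fun l => |h2 l|))
              * spec W1 * ∑ j ∈ Finset.range (T - 1), spec A ^ j
          + ∑ j ∈ Finset.range (T - 1), spec A ^ j * eunorm h1 := by
  have hA : 0 ≤ spec A := norm_nonneg _
  have hW : 0 ≤ spec W1 := norm_nonneg _
  set c := Finset.univ.sup' ⟨⟨0, hL⟩, Finset.mem_univ _⟩ (fun l => |h2 l|) with hcdef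
  have hle : ∀ l, |h2 l| ≤ c := fun l =>
    Finset.le_sup' (fun l => |h2 l|) (Finset.mem_univ l)
  have hc : 0 ≤ c := (abs_nonneg _).trans (hle ⟨0, hL⟩)
  intro T hT
  induction T, hT using Nat.le_induction with
  | base => simp
  | succ t ht ih =>
    obtain ⟨k, rfl⟩ : ∃ k, t = k + 1 := ⟨t - 1, by omega⟩
    rw [hz _ ht]
    simp only [Nat.add_sub_cancel] at ih ⊢
    have a1 := eunorm_add_le (A.mulVec (z (k + 1))
        + W1.mulVec (relu (W2.mulVec (z (k + 1)) + h2) - relu (W2.mulVec (z (k + 1))))) h1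
    have a2 := eunorm_add_le (A.mulVec (z (k + 1)))
        (W1.mulVec (relu (W2.mulVec (z (k + 1)) + h2) - relu (W2.mulVec (z (k + 1)))))
    have a3 := eunorm_mulVec_le A (z (k + 1))
    have a4 := eunorm_mulVec_le W1
      (relu (W2.mulVec (z (k + 1)) + h2) - relu (W2.mulVec (z (k + 1))))
    have a5 := mul_le_mul_of_nonneg_left (eunorm_le_sqrt_mul
      (relu (W2.mulVec (z (k + 1)) + h2) - relu (W2.mulVec (z (k + 1)))) c hc
      (fun i => (relu_diff_le _ _ i).trans (hle i))) hW
    have a6 := mul_le_mul_of_nonneg_left ih hA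
    rw [← Finset.sum_mul] at a6 ⊢
    have hs : ∑ j ∈ Finset.range (k + 1), spec A ^ j
        = spec A * ∑ j ∈ Finset.range k, spec A ^ j + 1 := by
      rw [Finset.sum_range_succ', Finset.mul_sum]
      simp [pow_succ']
    rw [hs, pow_succ']
    linarith
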